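/- Let a, b be real numbers with 0 < a ≤ b and a² ≥ a + b, and let f(x) = binom(a,x)·binom(b,x). Then for every x ∈ [0, a], f(x) ≤ f(ab/(a+b)) · (ab)⁴/(a+b)⁴. -/

import Mathlib

/-- Binomial coefficient extended to real arguments via the Gamma function. -/
noncomputable def rbinom (a x : ℝ) : ℝ :=
  Real.Gamma (a + 1) / (Real.Gamma (x + 1) * Real.Gamma (a - x + 1))

/-!
The function `L z = log Γ(z + 1)` is convex with unit increments `L (z + 1) - L z = log (z + 1)`.
Put `y = ab / (a + b)`, `p = a - y` and `q = b - y`, so that `p ≤ y ≤ q` and `p q = y²`.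

As `x` moves away from `y` by `t`, two of the four factorials in the denominator of `f x` have
their arguments decreased by `t` and two increased. The decreased arguments `(r₁, r₂)` are `(p, q)`
if `x` moves right and `(y, y)` if it moves left, the increased ones `(s₁, s₂)` are `(y, y)` and
`(q, p)` respectively. In both cases `r₁ r₂ = s₁ s₂`, `r₁ ≤ s₁` and `s₂ ≤ r₂`.

If `t ≥ 1`, comparing secant slopes of `L` with those of unit steps gives `f x ≤ f y`. If `t ≤ 1`,
the increment of `L` below `r₁` is at most the one above `s₁` by convexity, and the increment below
`r₂` is at most the one above `r₂`, which exceeds the one above `s₂` by no more than it does for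
unit steps, namely by `log ((r₂ + 1) / (s₂ + 1)) ≤ log (r₂ / s₂) = log (b / a)`.
Thus `f x ≤ (b / a) f y`, and `b / a ≤ y` amounts to `a + b ≤ a²`.
-/

open Set Real

/-- The logarithm of the generalized factorial `z! = Γ(z + 1)`. It turns products of binomial
coefficients into sums of values of a function that is convex on `(-1, ∞)`. -/
noncomputable def logFact (z : ℝ) : ℝ := log (Gamma (z + 1))

section Convex

variable {𝕜 : Type*} [Field 𝕜] [LinearOrder 𝕜] [IsStrictOrderedRing 𝕜]

lemma increment_mono_of_convexOn {s : Set 𝕜} {f : 𝕜 → 𝕜} (hf : ConvexOn 𝕜 s f) {u v t : 𝕜}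
    (hu : u ∈ s) (hvt : v + t ∈ s) (huv : u ≤ v) (ht : 0 ≤ t) :
    f (u + t) - f u ≤ f (v + t) - f v := by
  rcases ht.eq_or_lt with rfl | ht
  · simp
  have hmem : ∀ z, u ≤ z → z ≤ v + t → z ∈ s := fun z h₁ h₂ ↦ hf.1.ordConnected.out hu hvt ⟨h₁, h₂⟩
  have hslope : slope f u (u + t) ≤ slope f v (v + t) :=
    calc slope f u (u + t) ≤ slope f u (v + t) :=
          hf.slope_mono hu ⟨hmem _ (by linarith) (by linarith), by simp [ht.ne']⟩
            ⟨hvt, fun h : v + t = u ↦ by linarith⟩ (by linarith)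
      _ = slope f (v + t) u := slope_comm ..
      _ ≤ slope f (v + t) v :=
          hf.slope_mono hvt ⟨hu, fun h : u = v + t ↦ by linarith⟩
            ⟨hmem _ huv (by linarith), by simp [ht.ne']⟩ huv
      _ = slope f v (v + t) := slope_comm ..
  simpa only [slope_def_field, add_sub_cancel_left, div_le_div_iff_of_pos_right ht] using hslope

end Convex

section LogFact

variable {u v z t : ℝ}

lemma convexOn_logFact : ConvexOn ℝ (Ioi (-1)) logFact :=
  (convexOn_log_Gamma.translate_left 1).subset (fun z (hz : -1 < z) ↦ by
    rw [mem_preimage, mem_Ioi]; linarith) (convex_Ioi _)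

lemma logFact_add_one (hz : -1 < z) : logFact (z + 1) = logFact z + log (z + 1) := by
  have hz' : 0 < z + 1 := by linarith
  rw [logFact, logFact, Gamma_add_one hz'.ne', log_mul hz'.ne' (Gamma_pos_of_pos hz').ne', add_comm]

lemma logFact_increment_mono (hu : -1 < u) (huv : u ≤ v) (ht : 0 ≤ t) :
    logFact (u + t) - logFact u ≤ logFact (v + t) - logFact v :=
  increment_mono_of_convexOn convexOn_logFact hu (mem_Ioi.2 (by linarith)) huv ht

lemma logFact_increment_sub_le (hu : -1 < u) (huv : u ≤ v) (ht : 0 ≤ t) (ht₁ : t ≤ 1) :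
    (logFact (v + t) - logFact v) - (logFact (u + t) - logFact u) ≤ log ((v + 1) / (u + 1)) := by
  have hrest := logFact_increment_mono (u := u + t) (v := v + t) (t := 1 - t)
    (by linarith) (by linarith) (by linarith)
  rw [add_add_sub_cancel, add_add_sub_cancel, logFact_add_one hu,
    logFact_add_one (hu.trans_le huv)] at hrest
  rw [log_div (by linarith) (by linarith)]
  linarith

lemma mul_log_le_logFact_add_sub (hz : -1 < z) (ht : 1 ≤ t) :
    t * log (z + 1) ≤ logFact (z + t) - logFact z := by
  have hslope : slope logFact z (z + 1) ≤ slope logFact z (z + t) :=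
    convexOn_logFact.slope_mono hz ⟨mem_Ioi.2 (by linarith), by simp⟩
      ⟨mem_Ioi.2 (by linarith), fun h : z + t = z ↦ by linarith⟩ (by linarith)
  rw [slope_def_field, slope_def_field, add_sub_cancel_left, add_sub_cancel_left, div_one,
    logFact_add_one hz, add_sub_cancel_left, le_div_iff₀ (by linarith)] at hslope
  linarith

lemma logFact_sub_sub_le_mul_log (ht : 1 ≤ t) (htz : t < z + 1) :
    logFact z - logFact (z - t) ≤ t * log z := by
  have hslope : slope logFact z (z - t) ≤ slope logFact z (z - 1) :=
    convexOn_logFact.slope_mono (mem_Ioi.2 (by linarith))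
      ⟨mem_Ioi.2 (by linarith), fun h : z - t = z ↦ by linarith⟩
      ⟨mem_Ioi.2 (by linarith), by simp⟩ (by linarith)
  have hunit : logFact z = logFact (z - 1) + log z := by
    simpa only [sub_add_cancel] using logFact_add_one (z := z - 1) (by linarith)
  rw [slope_comm, slope_comm _ _ (z - 1), slope_def_field, slope_def_field, sub_sub_cancel,
    sub_sub_cancel, div_one, div_le_iff₀ (by linarith)] at hslope
  linear_combination hslope + t * hunit

end LogFact

section TwoPairs

variable {r₁ r₂ s₁ s₂ t : ℝ}

lemma logFact_pair_le_of_one_le (hs₁ : 0 < s₁) (hs₂ : 0 < s₂) (hrs : r₁ * r₂ ≤ s₁ * s₂)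
    (ht : 1 ≤ t) (htr₁ : t ≤ r₁) (htr₂ : t ≤ r₂) :
    logFact r₁ + logFact r₂ + logFact s₁ + logFact s₂
      ≤ logFact (r₁ - t) + logFact (r₂ - t) + logFact (s₁ + t) + logFact (s₂ + t) := by
  have hlog : log r₁ + log r₂ ≤ log (s₁ + 1) + log (s₂ + 1) := by
    rw [← log_mul (by linarith) (by linarith), ← log_mul (by linarith) (by linarith)]
    refine log_le_log (mul_pos (by linarith) (by linarith)) (hrs.trans ?_)
    gcongr <;> linarith
  have hmul := mul_le_mul_of_nonneg_left hlog (zero_le_one.trans ht)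
  linarith [logFact_sub_sub_le_mul_log ht (z := r₁) (by linarith),
    logFact_sub_sub_le_mul_log ht (z := r₂) (by linarith),
    mul_log_le_logFact_add_sub (z := s₁) (by linarith) ht,
    mul_log_le_logFact_add_sub (z := s₂) (by linarith) ht]

lemma logFact_pair_le_of_le_one (hs₂ : 0 < s₂) (hrs₁ : r₁ ≤ s₁) (hsr₂ : s₂ ≤ r₂)
    (ht : 0 ≤ t) (ht₁ : t ≤ 1) (htr₁ : t ≤ r₁) :
    logFact r₁ + logFact r₂ + logFact s₁ + logFact s₂
      ≤ logFact (r₁ - t) + logFact (r₂ - t) + logFact (s₁ + t) + logFact (s₂ + t)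
        + log (r₂ / s₂) := by
  have hfirst : logFact r₁ - logFact (r₁ - t) ≤ logFact (s₁ + t) - logFact s₁ := by
    simpa only [sub_add_cancel] using
      logFact_increment_mono (u := r₁ - t) (v := s₁) (by linarith) (by linarith) ht
  have hsecond : logFact r₂ - logFact (r₂ - t) ≤ logFact (r₂ + t) - logFact r₂ := by
    simpa only [sub_add_cancel] using
      logFact_increment_mono (u := r₂ - t) (v := r₂) (by linarith) (by linarith) ht
  have hexcess := logFact_increment_sub_le (by linarith) hsr₂ ht ht₁
  have hlog : log ((r₂ + 1) / (s₂ + 1)) ≤ log (r₂ / s₂) := by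
    refine log_le_log (div_pos (by linarith) (by linarith)) ?_
    rw [div_le_div_iff₀ (by linarith) hs₂]
    linarith
  linarith

lemma logFact_pair_le (hs₂ : 0 < s₂) (hrs₁ : r₁ ≤ s₁) (hsr₂ : s₂ ≤ r₂)
    (hrs : r₁ * r₂ ≤ s₁ * s₂) (ht : 0 ≤ t) (htr₁ : t ≤ r₁) (htr₂ : t ≤ r₂) :
    logFact r₁ + logFact r₂ + logFact s₁ + logFact s₂
      ≤ logFact (r₁ - t) + logFact (r₂ - t) + logFact (s₁ + t) + logFact (s₂ + t)
        + log (r₂ / s₂) := by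
  rcases le_total t 1 with ht₁ | ht₁
  · exact logFact_pair_le_of_le_one hs₂ hrs₁ hsr₂ ht ht₁ htr₁
  · have hratio : 0 ≤ log (r₂ / s₂) := log_nonneg ((one_le_div hs₂).2 hsr₂)
    linarith [logFact_pair_le_of_one_le (by linarith) hs₂ hrs ht₁ htr₁ htr₂]

end TwoPairs

section Binomial

variable {a b x y : ℝ}

lemma rbinom_eq_exp (hx : 0 ≤ x) (hxa : x ≤ a) :
    rbinom a x = exp (logFact a - (logFact x + logFact (a - x))) := by
  have hexp {z : ℝ} (hz : 0 ≤ z) : exp (logFact z) = Gamma (z + 1) :=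
    exp_log (Gamma_pos_of_pos (by linarith))
  rw [exp_sub, exp_add, hexp (hx.trans hxa), hexp hx, hexp (sub_nonneg.2 hxa), rbinom]

lemma rbinom_pos (hx : 0 ≤ x) (hxa : x ≤ a) : 0 < rbinom a x :=
  rbinom_eq_exp hx hxa ▸ exp_pos _

lemma rbinom_mul_rbinom_center_pos (ha : 0 < a) (hb : 0 < b) :
    0 < rbinom a (a * b / (a + b)) * rbinom b (a * b / (a + b)) := by
  have hy : 0 ≤ a * b / (a + b) := by positivity
  refine mul_pos (rbinom_pos hy ?_) (rbinom_pos hy ?_) <;>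
  · rw [div_le_iff₀ (by positivity)]
    nlinarith

lemma logFact_center_le (hy₀ : 0 < y) (hya : y < a) (hab : a ≤ b)
    (hy : (a - y) * (b - y) = y * y) (hx : 0 ≤ x) (hxa : x ≤ a) :
    2 * logFact y + logFact (a - y) + logFact (b - y)
      ≤ 2 * logFact x + logFact (a - x) + logFact (b - x) + log (y / (a - y)) := by
  have hp : 0 < a - y := sub_pos.2 hya
  have hay : a - y ≤ y := by nlinarith
  have hyb : y ≤ b - y := by nlinarith
  rcases le_total y x with hyx | hxy
  · have hpair := logFact_pair_le hy₀ hay hyb hy.le (sub_nonneg.2 hyx)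
      (by linarith) (by linarith)
    have hratio : (b - y) / y = y / (a - y) := by
      rw [div_eq_div_iff hy₀.ne' hp.ne']
      linarith
    rw [hratio, sub_sub_sub_cancel_right, sub_sub_sub_cancel_right, add_sub_cancel] at hpair
    linarith
  · have hpair := logFact_pair_le hp hyb hay (by linarith) (sub_nonneg.2 hxy)
      (by linarith) (by linarith)
    rw [sub_sub_cancel, sub_add_sub_cancel, sub_add_sub_cancel] at hpair
    linarith

lemma rbinom_mul_rbinom_le (hy₀ : 0 < y) (hya : y < a) (hab : a ≤ b)
    (hy : (a - y) * (b - y) = y * y) (hx : 0 ≤ x) (hxa : x ≤ a) :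
    rbinom a x * rbinom b x ≤ y / (a - y) * (rbinom a y * rbinom b y) := by
  have hp : 0 < a - y := sub_pos.2 hya
  rw [rbinom_eq_exp hx hxa, rbinom_eq_exp hx (hxa.trans hab), rbinom_eq_exp hy₀.le hya.le,
    rbinom_eq_exp hy₀.le (hya.le.trans hab),
    ← exp_log (div_pos hy₀ hp), ← exp_add, ← exp_add, ← exp_add, exp_le_exp]
  linarith [logFact_center_le hy₀ hya hab hy hx hxa]

lemma div_le_mul_div_add_pow (ha : 0 < a) (hab : a ≤ b) (hsq : a + b ≤ a ^ 2) {n : ℕ}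
    (hn : n ≠ 0) : b / a ≤ (a * b / (a + b)) ^ n := by
  have hb : 0 < b := ha.trans_le hab
  have hy : b / a ≤ a * b / (a + b) := by
    rw [div_le_div_iff₀ ha (by positivity)]
    nlinarith
  exact hy.trans (le_self_pow₀ (((one_le_div ha).2 hab).trans hy) hn)

theorem stmt13_general (ha : 0 < a) (hab : a ≤ b) (hx : x ∈ Icc 0 a) :
    rbinom a x * rbinom b x
      ≤ b / a * (rbinom a (a * b / (a + b)) * rbinom b (a * b / (a + b))) := by
  have hb : 0 < b := ha.trans_le hab
  have hp : a - a * b / (a + b) = a * a / (a + b) := by field_simp; ring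
  have hq : b - a * b / (a + b) = b * b / (a + b) := by field_simp; ring
  have hratio : b / a = a * b / (a + b) / (a - a * b / (a + b)) := by rw [hp]; field_simp
  rw [hratio]
  refine rbinom_mul_rbinom_le (by positivity) ?_ hab ?_ hx.1 hx.2
  · rw [← sub_pos, hp]; positivity
  · rw [hp, hq]; field_simp

end Binomial

theorem stmt13 (a b : ℝ) (ha : 0 < a) (hab : a ≤ b) (hsq : a + b ≤ a ^ 2)
    (f : ℝ → ℝ) (hf : ∀ x, f x = rbinom a x * rbinom b x) :
    ∀ x ∈ Set.Icc (0 : ℝ) a,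
      f x ≤ f (a * b / (a + b)) * (a * b) ^ 4 / (a + b) ^ 4 := by
  intro x hx
  rw [hf, hf, mul_div_assoc, ← div_pow, mul_comm (_ * _)]
  exact (stmt13_general ha hab hx).trans <| mul_le_mul_of_nonneg_right
    (div_le_mul_div_add_pow ha hab hsq four_ne_zero)
    (rbinom_mul_rbinom_center_pos ha (ha.trans_le hab)).le
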